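/- arXiv:2109.00473 — 3 statements merged into one kernel-verified Lean document; each statement's English description precedes it below -/
import Mathlib

section
/- Let T be a tournament on a 5-element vertex set in which every vertex has out-degree exactly 2. Then the edge set of T is the disjoint union of two edge-disjoint directed Hamiltonian cycles: there exist two directed cycles, each passing through all 5 vertices, having no directed edge in common, whose edges together are exactly the edges of T. -/
/-- A tournament: an irreflexive relation such that for distinct vertices exactly one
direction holds. -/
def IsTournament (r : Fin 5 → Fin 5 → Prop) : Prop :=
  (∀ a, ¬ r a a) ∧ ∀ a b : Fin 5, a ≠ b → Xor' (r a b) (r b a)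

/-- The out-degree of a vertex: the number of vertices it defeats. -/
noncomputable def outDeg (r : Fin 5 → Fin 5 → Prop) (v : Fin 5) : ℕ :=
  Nat.card {w : Fin 5 // r v w}

/-!
Write `v → a, b` with `a → b` for the two out-neighbours of a vertex `v`, and `b → c, d` with
`c → d` for those of `b`. Comparing out-degrees forces `c, d → v`, then `a → c`, then `d → a`.
So in the cyclic order `v, a, b, c, d` each of these five vertices beats the next two. A further
vertex would have to beat all five, hence there is none, and the tournament is the circulant one on
`ℤ/5` with steps `1` and `2`. Both steps are units modulo `5`, so the edges of each step form a
Hamiltonian cycle.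
-/

section HamiltonianDecomposition

variable {V W : Type*} {n : ℕ} [NeZero n]

/-- The edge set of the relation `r` is the disjoint union of two directed Hamiltonian cycles. A
cycle is encoded by the cyclic enumeration of its vertices, so its edges are the pairs
`(c i, c (i + 1))`, with indices taken modulo `n`. -/
def IsHamiltonianDecomposition (r : V → V → Prop) (c d : Fin n → V) : Prop :=
  Function.Bijective c ∧ Function.Bijective d ∧
    (∀ i, r (c i) (c (i + 1))) ∧
    (∀ i, r (d i) (d (i + 1))) ∧
    (∀ i j, ¬ (c i = d j ∧ c (i + 1) = d (j + 1))) ∧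
    (∀ a b, r a b ↔
      (∃ i, c i = a ∧ c (i + 1) = b) ∨
      (∃ i, d i = a ∧ d (i + 1) = b))

theorem IsHamiltonianDecomposition.comp_relIso {s : W → W → Prop} {r : V → V → Prop}
    {c d : Fin n → W} (h : IsHamiltonianDecomposition s c d) (e : s ≃r r) :
    IsHamiltonianDecomposition r (e ∘ c) (e ∘ d) := by
  obtain ⟨hc, hd, hcr, hdr, hdisj, hedge⟩ := h
  refine ⟨e.bijective.comp hc, e.bijective.comp hd, fun i => e.map_rel_iff.2 (hcr i),
    fun i => e.map_rel_iff.2 (hdr i),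
    fun i j hij => hdisj i j (hij.imp (e.injective ·) (e.injective ·)),
    e.surjective.forall₂.2 fun a b => ?_⟩
  simpa only [e.map_rel_iff, Function.comp_apply, e.injective.eq_iff] using hedge a b

theorem exists_mul_eq_and_mul_add_one_eq_iff {R : Type*} [Semiring R] {u a b : R}
    (hu : IsUnit u) : (∃ i, u * i = a ∧ u * (i + 1) = b) ↔ b = a + u := by
  constructor
  · rintro ⟨i, rfl, rfl⟩
    exact mul_add_one u i
  · rintro rfl
    obtain ⟨i, rfl⟩ := (IsUnit.isUnit_iff_mulLeft_bijective.1 hu).surjective a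
    exact ⟨i, rfl, mul_add_one u i⟩

/-- The circulant digraph with steps `u` and `v`. It is used on `G = Fin n`, whose addition is
modulo `n`. -/
def circulantRel {G : Type*} [Add G] (u v i j : G) : Prop :=
  j = i + u ∨ j = i + v

open scoped Fin.CommRing in
theorem isHamiltonianDecomposition_circulantRel {u v : Fin n} (hu : IsUnit u) (hv : IsUnit v)
    (huv : u ≠ v) : IsHamiltonianDecomposition (circulantRel u v) (u * ·) (v * ·) := by
  refine ⟨IsUnit.isUnit_iff_mulLeft_bijective.1 hu, IsUnit.isUnit_iff_mulLeft_bijective.1 hv,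
    fun i => .inl (mul_add_one u i), fun i => .inr (mul_add_one v i), ?_, fun a b => ?_⟩
  · rintro i j ⟨htail, hhead⟩
    simp only [mul_add_one] at htail hhead
    rw [htail] at hhead
    exact huv (add_left_cancel hhead)
  · rw [exists_mul_eq_and_mul_add_one_eq_iff hu, exists_mul_eq_and_mul_add_one_eq_iff hv,
      circulantRel]

instance : Std.Trichotomous (circulantRel (1 : Fin 5) 2) where
  trichotomous := by
    unfold circulantRel
    decide

end HamiltonianDecomposition

section Tournament

variable {V : Type*} {r : V → V → Prop}

theorem ne_of_rel_of_rel [Std.Asymm r] {x y z : V} (hxy : r x y) (hyz : r y z) : z ≠ x := by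
  rintro rfl
  exact asymm_of r hxy hyz

theorem rel_of_encard_eq_two [Std.Trichotomous r] {v a b w : V}
    (hv : {w | r v w}.encard = 2) (ha : r v a) (hb : r v b) (hab : a ≠ b)
    (hwv : w ≠ v) (hwa : w ≠ a) (hwb : w ≠ b) : r w v := by
  have hout : {a, b} = {w | r v w} :=
    (Set.toFinite {a, b}).eq_of_subset_of_encard_le (Set.pair_subset ha hb)
      (by rw [hv, Set.encard_pair hab])
  have hvw : ¬ r v w := fun h => (hout.ge h).elim hwa hwb
  exact (trichotomous_of r w v).resolve_right (not_or.2 ⟨hwv, hvw⟩)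

theorem exists_rel_rel_rel_of_encard_eq_two [Std.Trichotomous r] {v : V}
    (hv : {w | r v w}.encard = 2) : ∃ a b, r v a ∧ r v b ∧ r a b := by
  obtain ⟨a, b, hab, hout⟩ := Set.encard_eq_two.1 hv
  have ha : r v a := hout.ge (Set.mem_insert a {b})
  have hb : r v b := hout.ge (Set.mem_insert_of_mem a rfl)
  rcases trichotomous_of r a b with h | h | h
  · exact ⟨a, b, ha, hb, h⟩
  · exact absurd h hab
  · exact ⟨b, a, hb, ha, h⟩

theorem exists_rel_add_one_rel_add_two [Nonempty V] [Std.Asymm r] [Std.Trichotomous r]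
    (hr : ∀ v, {w | r v w}.encard = 2) :
    ∃ f : Fin 5 → V, ∀ i, r (f i) (f (i + 1)) ∧ r (f i) (f (i + 2)) := by
  have := Std.Asymm.irrefl (r := r)
  obtain ⟨v⟩ := ‹Nonempty V›
  obtain ⟨a, b, hva, hvb, hab⟩ := exists_rel_rel_rel_of_encard_eq_two (hr v)
  obtain ⟨c, d, hbc, hbd, hcd⟩ := exists_rel_rel_rel_of_encard_eq_two (hr b)
  have hne_ca : c ≠ a := ne_of_rel_of_rel hab hbc
  have hne_da : d ≠ a := ne_of_rel_of_rel hab hbd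
  have hcv : r c v :=
    rel_of_encard_eq_two (hr v) hva hvb (ne_of_irrefl hab) (ne_of_rel_of_rel hvb hbc) hne_ca
      (ne_of_irrefl' hbc)
  have hdv : r d v :=
    rel_of_encard_eq_two (hr v) hva hvb (ne_of_irrefl hab) (ne_of_rel_of_rel hvb hbd) hne_da
      (ne_of_irrefl' hbd)
  have hac : r a c :=
    rel_of_encard_eq_two (hr c) hcd hcv (ne_of_irrefl hdv) hne_ca.symm hne_da.symm
      (ne_of_irrefl' hva)
  have hda : r d a :=
    rel_of_encard_eq_two (hr a) hab hac (ne_of_irrefl hbc) hne_da (ne_of_irrefl' hbd)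
      (ne_of_irrefl' hcd)
  refine ⟨![v, a, b, c, d], fun i => ?_⟩
  fin_cases i
  exacts [⟨hva, hvb⟩, ⟨hab, hac⟩, ⟨hbc, hbd⟩, ⟨hcd, hcv⟩, ⟨hdv, hda⟩]

theorem eq_univ_of_forall_rel_mem [Std.Trichotomous r] {s : Set V}
    (hs : ∀ x ∈ s, ∀ y, r x y → y ∈ s) (hcard : ∀ v, {w | r v w}.encard < s.encard) :
    s = Set.univ := by
  refine Set.eq_univ_of_forall fun v => by_contra fun hv => ?_
  have hsv : s ⊆ {w | r v w} := fun x hx => by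
    rcases trichotomous_of r v x with h | rfl | h
    · exact h
    · exact absurd hx hv
    · exact absurd (hs x hx v h) hv
  exact (hcard v).not_ge (Set.encard_le_encard hsv)

theorem nonempty_circulantRel_relIso [Nonempty V] [Std.Asymm r] [Std.Trichotomous r]
    (hr : ∀ v, {w | r v w}.encard = 2) : Nonempty (circulantRel (1 : Fin 5) 2 ≃r r) := by
  obtain ⟨f, hf⟩ := exists_rel_add_one_rel_add_two hr
  let e : circulantRel (1 : Fin 5) 2 ↪r r := .ofMonotone f <| by
    rintro i j (rfl | rfl)
    exacts [(hf i).1, (hf i).2]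
  have hclosed : ∀ x ∈ Set.range f, ∀ y, r x y → y ∈ Set.range f := by
    rintro _ ⟨i, rfl⟩ y hy
    by_contra hrange
    have hne (j : Fin 5) : y ≠ f j := fun h => hrange ⟨j, h.symm⟩
    exact asymm_of r hy <| rel_of_encard_eq_two (hr (f i)) (hf i).1 (hf i).2
      (e.injective.ne (by simp)) (hne _) (hne _) (hne _)
  have hcard (v : V) : {w | r v w}.encard < (Set.range f).encard := by
    have hf_inj : Function.Injective f := e.injective
    rw [hr, ← Set.image_univ, hf_inj.encard_image, Set.encard_univ, ENat.card_eq_coe_fintype_card,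
      Fintype.card_fin]
    norm_num
  exact ⟨.ofSurjective e (Set.range_eq_univ.1 (eq_univ_of_forall_rel_mem hclosed hcard))⟩

theorem regular_tournament_two_hamiltonian_cycles_general [Nonempty V] (r : V → V → Prop)
    [Std.Asymm r] [Std.Trichotomous r] (hr : ∀ v, {w | r v w}.encard = 2) :
    ∃ c d : Fin 5 → V, IsHamiltonianDecomposition r c d := by
  obtain ⟨e⟩ := nonempty_circulantRel_relIso hr
  have two_isUnit : IsUnit (2 : Fin 5) := .of_mul_eq_one 3 (by decide)
  exact ⟨_, _, (isHamiltonianDecomposition_circulantRel isUnit_one two_isUnit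
    (by decide)).comp_relIso e⟩

end Tournament

theorem IsTournament.asymm {r : Fin 5 → Fin 5 → Prop} (hr : IsTournament r) : Std.Asymm r where
  asymm a b hab hba := by
    rcases hr.2 a b (fun h => hr.1 a (h ▸ hab)) with h | h
    exacts [h.2 hba, h.2 hab]

theorem IsTournament.trichotomous {r : Fin 5 → Fin 5 → Prop} (hr : IsTournament r) :
    Std.Trichotomous r where
  trichotomous a b hab hba := by_contra fun hne => (hr.2 a b hne).elim (hab ·.1) (hba ·.1)

theorem encard_setOf_rel_eq_outDeg {r : Fin 5 → Fin 5 → Prop} (v : Fin 5) :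
    {w | r v w}.encard = outDeg r v :=
  (Set.toFinite _).cast_ncard_eq.symm

/-- a tournament on 5 vertices in which every vertex has out-degree 2 is
the edge-disjoint union of two directed Hamiltonian cycles. -/
theorem regular_tournament_two_hamiltonian_cycles (r : Fin 5 → Fin 5 → Prop)
    (hr : IsTournament r) (h2 : ∀ v, outDeg r v = 2) :
    ∃ c d : Fin 5 → Fin 5, Function.Bijective c ∧ Function.Bijective d ∧
      (∀ i : Fin 5, r (c i) (c (i + 1))) ∧
      (∀ i : Fin 5, r (d i) (d (i + 1))) ∧
      (∀ i j : Fin 5, ¬ (c i = d j ∧ c (i + 1) = d (j + 1))) ∧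
      (∀ a b : Fin 5, r a b ↔
        (∃ i : Fin 5, c i = a ∧ c (i + 1) = b) ∨
        (∃ i : Fin 5, d i = a ∧ d (i + 1) = b)) := by
  have := hr.asymm
  have := hr.trichotomous
  exact regular_tournament_two_hamiltonian_cycles_general r fun v => by
    rw [encard_setOf_rel_eq_outDeg, h2]
    rfl
end

section
/- The number of tournaments on the 5-element set Fin 5 having no vertex of out-degree 4, no vertex of out-degree 0, and exactly one vertex of out-degree 2 is exactly 240. -/
/-!
As the scores sum to `10`, exactly one score `2` and none equal to `0` or `4` force the score
sequence `3, 3, 2, 1, 1`. The arc inside each pair of vertices with equal score orders that pair,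
so the tournament labels its own vertices `a, b, c, d, e` with `a → b` and `d → e`. The only
vertex beating `b` is `a` and the only vertex beaten by `d` is `e`; this leaves free only the arcs
among `a, c, e`, and the scores of `a` and `c` make these a directed 3-cycle. A tournament is
therefore the same thing as a labelling, `5!` choices, and an orientation of the 3-cycle,
`2` choices; the orientations give `Γ₁,₁` and `Γ₁,₂`.
-/

section Tournament

variable {V W : Type*}

/-- Tournaments on an arbitrary vertex type; for `Fin 5` this unfolds to `IsTournament`. -/
def IsTournamentRel (r : V → V → Prop) : Prop :=
  (∀ a, ¬ r a a) ∧ ∀ a b, a ≠ b → Xor (r a b) (r b a)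

/-- The out-degree, or score, of a vertex of an arbitrary relation; for `Fin 5` this unfolds to
`outDeg`. -/
noncomputable def outDegree (r : V → V → Prop) (v : V) : ℕ :=
  Nat.card {w // r v w}

lemma isTournamentRel_flip {r : V → V → Prop} (hr : IsTournamentRel r) :
    IsTournamentRel (flip r) :=
  ⟨hr.1, fun a b hab => hr.2 b a hab.symm⟩

lemma IsTournamentRel.preimage {r : V → V → Prop} (hr : IsTournamentRel r) {f : W → V}
    (hf : Function.Injective f) : IsTournamentRel (f ⁻¹'o r) :=
  ⟨fun a => hr.1 (f a), fun _ _ hab => hr.2 _ _ (hf.ne hab)⟩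

lemma IsTournamentRel.not_rel_iff {r : V → V → Prop} (hr : IsTournamentRel r) {a b : V}
    (hab : a ≠ b) : ¬ r a b ↔ r b a :=
  xor_iff_not_iff'.mp (hr.2 a b hab)

lemma IsTournamentRel.eq_of_le {r s : V → V → Prop} (hr : IsTournamentRel r)
    (hs : IsTournamentRel s) (hle : r ≤ s) : r = s := by
  refine le_antisymm hle fun a b hab => ?_
  have hne : a ≠ b := fun h => hs.1 b (h ▸ hab)
  by_contra hrab
  exact (hs.not_rel_iff hne.symm).mpr hab (hle b a ((hr.not_rel_iff hne).mp hrab))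

lemma IsTournamentRel.exists_rel_of_one_lt_card {r : V → V → Prop} (hr : IsTournamentRel r)
    {s : Finset V} (hs : 1 < s.card) : ∃ a ∈ s, ∃ b ∈ s, r a b := by
  obtain ⟨a, ha, b, hb, hab⟩ := Finset.one_lt_card.mp hs
  rcases (hr.2 a b hab).or with h | h
  exacts [⟨a, ha, b, hb, h⟩, ⟨b, hb, a, ha, h⟩]

lemma outDegree_preimage (r : V → V → Prop) (e : W ≃ V) (w : W) :
    outDegree (e ⁻¹'o r) w = outDegree r (e w) :=
  Nat.card_congr (e.subtypeEquiv fun _ => Iff.rfl)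

lemma IsTournamentRel.rel_of_outDegree_eq_one {r : V → V → Prop} (hr : IsTournamentRel r)
    {v w x : V} (hv : outDegree r v = 1) (hvw : r v w) (hxw : x ≠ w) (hxv : x ≠ v) : r x v := by
  refine (hr.not_rel_iff hxv.symm).mp fun hvx => hxw ?_
  have := (Nat.card_eq_one_iff_unique.mp hv).1
  exact congrArg Subtype.val (Subsingleton.elim (⟨x, hvx⟩ : {w // r v w}) ⟨w, hvw⟩)

variable [Fintype V] {r : V → V → Prop}

open scoped Classical in
lemma outDegree_eq_sum (r : V → V → Prop) (v : V) :
    outDegree r v = ∑ w, if r v w then 1 else 0 := by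
  rw [outDegree, Nat.card_eq_fintype_card, Fintype.card_subtype, Finset.card_filter]

lemma sum_outDegree_flip (r : V → V → Prop) :
    ∑ v, outDegree (flip r) v = ∑ v, outDegree r v := by
  simp only [outDegree_eq_sum, flip]
  exact Finset.sum_comm

lemma IsTournamentRel.outDegree_add_outDegree_flip (hr : IsTournamentRel r) (v : V) :
    outDegree r v + outDegree (flip r) v = Fintype.card V - 1 := by
  classical
  have split : ∀ w, ((if r v w then 1 else 0) + if flip r v w then 1 else 0) =
      if w ≠ v then 1 else 0 := by
    intro w
    rcases eq_or_ne w v with rfl | hne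
    · simp [flip, hr.1 w]
    · by_cases hvw : r v w <;> simp [flip, ← hr.not_rel_iff hne.symm, hvw, hne]
  rw [outDegree_eq_sum, outDegree_eq_sum, ← Finset.sum_add_distrib,
    Finset.sum_congr rfl fun w _ => split w, ← Finset.card_filter, Finset.filter_ne',
    Finset.card_erase_of_mem (Finset.mem_univ v), Finset.card_univ]

lemma IsTournamentRel.sum_outDegree (hr : IsTournamentRel r) :
    ∑ v, outDegree r v = (Fintype.card V).choose 2 := by
  have double : (∑ v, outDegree r v) * 2 = Fintype.card V * (Fintype.card V - 1) :=
    calc (∑ v, outDegree r v) * 2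
        = ∑ v, (outDegree r v + outDegree (flip r) v) := by
          rw [Finset.sum_add_distrib, sum_outDegree_flip, mul_two]
      _ = Fintype.card V * (Fintype.card V - 1) := by
          simp only [hr.outDegree_add_outDegree_flip, Finset.sum_const, Finset.card_univ,
            smul_eq_mul]
  rw [Nat.choose_two_right, ← double, Nat.mul_div_cancel _ two_pos]

end Tournament

section Model

/-- The out-degrees of `modelTournament`. -/
def modelScore : Fin 5 → ℕ := ![3, 3, 2, 1, 1]

/-- Representatives of the two isomorphism classes: `0 → 1` are the vertices of out-degree 3,
`3 → 4` those of out-degree 1, and `b` is the orientation of the 3-cycle on `0`, `2`, `4`,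
the only arcs not forced by these labels. -/
def modelTournament (b : Bool) (i j : Fin 5) : Prop :=
  ![![false, true,  b,     true,  !b],
    ![false, false, true,  true,  true],
    ![!b,    false, false, true,  b],
    ![false, false, false, false, true],
    ![b,     false, !b,    false, false]] i j = true

instance (b : Bool) : DecidableRel (modelTournament b) :=
  fun _ _ => inferInstanceAs (Decidable (_ = true))

lemma isTournamentRel_modelTournament (b : Bool) : IsTournamentRel (modelTournament b) := by
  revert b
  unfold IsTournamentRel
  decide

lemma outDegree_modelTournament (b : Bool) (i : Fin 5) :
    outDegree (modelTournament b) i = modelScore i := by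
  rw [outDegree, Nat.card_eq_fintype_card]
  revert b i
  decide

lemma eq_zero_one_of_modelTournament {b : Bool} {i j : Fin 5} (hij : modelTournament b i j)
    (hi : modelScore i = 3) (hj : modelScore j = 3) : i = 0 ∧ j = 1 := by
  revert b i j
  decide

lemma eq_three_four_of_modelTournament {b : Bool} {i j : Fin 5} (hij : modelTournament b i j)
    (hi : modelScore i = 1) (hj : modelScore j = 1) : i = 3 ∧ j = 4 := by
  revert b i j
  decide

lemma eq_two_of_modelScore_eq_two {i : Fin 5} (hi : modelScore i = 2) : i = 2 := by
  revert i
  decide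

/-- An isomorphism of models preserves scores and the arcs `0 → 1`, `3 → 4`, hence all labels. -/
lemma eq_refl_of_preimage_modelTournament {b c : Bool} {τ : Fin 5 ≃ Fin 5}
    (h : τ ⁻¹'o modelTournament c = modelTournament b) : τ = Equiv.refl _ ∧ c = b := by
  have score (i : Fin 5) : modelScore (τ i) = modelScore i := by
    rw [← outDegree_modelTournament c, ← outDegree_preimage, h, outDegree_modelTournament]
  have rel {i j : Fin 5} (hij : modelTournament b i j) : modelTournament c (τ i) (τ j) :=
    (congrFun₂ h i j).mpr hij
  obtain ⟨h0, h1⟩ := eq_zero_one_of_modelTournament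
    (rel (i := 0) (j := 1) rfl) (score 0) (score 1)
  obtain ⟨h3, h4⟩ := eq_three_four_of_modelTournament
    (rel (i := 3) (j := 4) rfl) (score 3) (score 4)
  have h2 : τ 2 = 2 := eq_two_of_modelScore_eq_two (score 2)
  have hτ : τ = Equiv.refl _ := by
    ext i
    fin_cases i <;> simp [h0, h1, h2, h3, h4]
  subst hτ
  exact ⟨rfl, Bool.eq_iff_iff.mpr (iff_of_eq (congrFun₂ h 0 2))⟩

/-- A tournament whose vertices `0, 1, 2, 3, 4` already play the roles they have in
`modelTournament`. -/
structure IsLabelled (s : Fin 5 → Fin 5 → Prop) : Prop where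
  tournament : IsTournamentRel s
  score (i : Fin 5) : outDegree s i = modelScore i
  rel_zero_one : s 0 1
  rel_three_four : s 3 4

namespace IsLabelled

variable {s : Fin 5 → Fin 5 → Prop}

lemma rel_one (hs : IsLabelled s) {i : Fin 5} (hi0 : i ≠ 0) (hi1 : i ≠ 1) : s 1 i := by
  have flip_score_one : outDegree (flip s) 1 = 1 := by
    have := hs.tournament.outDegree_add_outDegree_flip 1
    rw [hs.score, Fintype.card_fin] at this
    exact Nat.add_left_cancel this
  exact (isTournamentRel_flip hs.tournament).rel_of_outDegree_eq_one flip_score_one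
    hs.rel_zero_one hi0 hi1

lemma rel_three (hs : IsLabelled s) {i : Fin 5} (hi4 : i ≠ 4) (hi3 : i ≠ 3) : s i 3 :=
  hs.tournament.rel_of_outDegree_eq_one (hs.score 3) hs.rel_three_four hi4 hi3

lemma cycle (hs : IsLabelled s) : (s 0 2 ∧ s 2 4 ∧ s 4 0) ∨ (s 2 0 ∧ s 0 4 ∧ s 4 2) := by
  classical
  have h03 : s 0 3 := hs.rel_three (by decide) (by decide)
  have h23 : s 2 3 := hs.rel_three (by decide) (by decide)
  have h21 : ¬ s 2 1 :=
    (hs.tournament.not_rel_iff (by decide)).mpr (hs.rel_one (by decide) (by decide))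
  have row_zero : Xor (s 0 2) (s 0 4) := by
    have sum_eq := (outDegree_eq_sum s 0).symm.trans (hs.score 0)
    simp only [Fin.sum_univ_five, hs.tournament.1 0, hs.rel_zero_one, h03, modelScore] at sum_eq
    by_cases h02 : s 0 2 <;> by_cases h04 : s 0 4 <;> simp [h02, h04] at sum_eq ⊢
  have row_two : Xor (s 2 0) (s 2 4) := by
    have sum_eq := (outDegree_eq_sum s 2).symm.trans (hs.score 2)
    simp only [Fin.sum_univ_five, hs.tournament.1 2, h21, h23, modelScore] at sum_eq
    by_cases h20 : s 2 0 <;> by_cases h24 : s 2 4 <;> simp [h20, h24] at sum_eq ⊢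
  have h02 : ¬ s 0 2 ↔ s 2 0 := hs.tournament.not_rel_iff (by decide)
  have h04 : ¬ s 0 4 ↔ s 4 0 := hs.tournament.not_rel_iff (by decide)
  have h24 : ¬ s 2 4 ↔ s 4 2 := hs.tournament.not_rel_iff (by decide)
  grind

lemma exists_modelTournament_eq (hs : IsLabelled s) : ∃ b, modelTournament b = s := by
  have h01 : s 0 1 := hs.rel_zero_one
  have h34 : s 3 4 := hs.rel_three_four
  have h12 : s 1 2 := hs.rel_one (by decide) (by decide)
  have h13 : s 1 3 := hs.rel_one (by decide) (by decide)
  have h14 : s 1 4 := hs.rel_one (by decide) (by decide)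
  have h03 : s 0 3 := hs.rel_three (by decide) (by decide)
  have h23 : s 2 3 := hs.rel_three (by decide) (by decide)
  rcases hs.cycle with ⟨h02, h24, h40⟩ | ⟨h20, h04, h42⟩
  · refine ⟨true, (isTournamentRel_modelTournament true).eq_of_le hs.tournament fun i j hij => ?_⟩
    fin_cases i <;> fin_cases j <;> first | assumption | exact absurd hij (by decide)
  · refine ⟨false, (isTournamentRel_modelTournament false).eq_of_le hs.tournament fun i j hij => ?_⟩
    fin_cases i <;> fin_cases j <;> first | assumption | exact absurd hij (by decide)

end IsLabelled

end Model

section Classification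

variable {V : Type*}

/-- The configurations of `Γ₁,₁ ∪ Γ₁,₂`, for an arbitrary vertex type: tournaments with no
Condorcet winner or loser among five vertices and a single vertex of out-degree 2. -/
def HasUniqueMiddle (r : V → V → Prop) : Prop :=
  IsTournamentRel r ∧ (¬ ∃ w, outDegree r w = 4) ∧ (¬ ∃ l, outDegree r l = 0) ∧
    ∃! v, outDegree r v = 2

lemma hasUniqueMiddle_preimage_modelTournament (b : Bool) (ρ : V ≃ Fin 5) :
    HasUniqueMiddle (ρ ⁻¹'o modelTournament b) := by
  simp only [HasUniqueMiddle, outDegree_preimage, outDegree_modelTournament,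
    (isTournamentRel_modelTournament b).preimage ρ.injective, true_and]
  have score_ne : ∀ i, modelScore i ≠ 4 ∧ modelScore i ≠ 0 := by decide
  refine ⟨fun ⟨w, hw⟩ => (score_ne _).1 hw, fun ⟨l, hl⟩ => (score_ne _).2 hl, ρ.symm 2, ?_, ?_⟩
  · simp [modelScore]
  · exact fun v hv => (Equiv.eq_symm_apply ρ).mpr (eq_two_of_modelScore_eq_two hv)

/-- The copy of `modelTournament b` on `V` in which each vertex plays the role assigned to it
by `ρ`. -/
def relabelledModel (p : (V ≃ Fin 5) × Bool) : {r : V → V → Prop // HasUniqueMiddle r} :=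
  ⟨p.1 ⁻¹'o modelTournament p.2, hasUniqueMiddle_preimage_modelTournament p.2 p.1⟩

lemma relabelledModel_injective :
    Function.Injective (relabelledModel (V := V)) := by
  rintro ⟨ρ, b⟩ ⟨ρ', c⟩ h
  have transported : (ρ.symm.trans ρ') ⁻¹'o modelTournament c = modelTournament b := by
    have hrel : ρ ⁻¹'o modelTournament b = ρ' ⁻¹'o modelTournament c := congrArg Subtype.val h
    funext i j
    simpa [Order.Preimage] using (congrFun₂ hrel (ρ.symm i) (ρ.symm j)).symm
  obtain ⟨hτ, rfl⟩ := eq_refl_of_preimage_modelTournament transported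
  have hρ : ρ' = ρ := by
    ext1 v
    simpa using Equiv.congr_fun hτ (ρ v)
  rw [hρ]

variable [Fintype V]

open scoped Classical in
lemma HasUniqueMiddle.card_outDegree_eq {r : V → V → Prop} (hr : HasUniqueMiddle r)
    (hV : Fintype.card V = 5) :
    Finset.card {v | outDegree r v = 3} = 2 ∧ Finset.card {v | outDegree r v = 1} = 2 := by
  obtain ⟨ht, h4, h0, h2⟩ := hr
  have score_mem (v : V) : outDegree r v = 1 ∨ outDegree r v = 2 ∨ outDegree r v = 3 := by
    have := ht.outDegree_add_outDegree_flip v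
    have := not_exists.mp h4 v
    have := not_exists.mp h0 v
    omega
  have card_two : Finset.card {v | outDegree r v = 2} = 1 :=
    (Fintype.existsUnique_iff_card_one _).mp h2
  have vertices : Finset.card {v | outDegree r v = 1} + Finset.card {v | outDegree r v = 2} +
      Finset.card {v | outDegree r v = 3} = 5 := by
    simp only [Finset.card_filter, ← Finset.sum_add_distrib]
    rw [← hV, Fintype.card_eq_sum_ones]
    refine Finset.sum_congr rfl fun v _ => ?_
    rcases score_mem v with h | h | h <;> simp [h]
  have arcs : Finset.card {v | outDegree r v = 1} + 2 * Finset.card {v | outDegree r v = 2} +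
      3 * Finset.card {v | outDegree r v = 3} = Nat.choose 5 2 := by
    simp only [Finset.card_filter, Finset.mul_sum, ← Finset.sum_add_distrib]
    rw [← hV, ← ht.sum_outDegree]
    refine Finset.sum_congr rfl fun v _ => ?_
    rcases score_mem v with h | h | h <;> simp [h]
  have arcs_eq : Nat.choose 5 2 = 10 := rfl
  omega

lemma HasUniqueMiddle.exists_isLabelled_preimage {r : V → V → Prop} (hr : HasUniqueMiddle r)
    (hV : Fintype.card V = 5) :
    ∃ σ : Fin 5 ≃ V, IsLabelled (σ ⁻¹'o r) := by
  classical
  obtain ⟨card_three, card_one⟩ := hr.card_outDegree_eq hV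
  obtain ⟨a, ha, b, hb, hab⟩ :=
    hr.1.exists_rel_of_one_lt_card (card_three.symm ▸ one_lt_two)
  obtain ⟨d, hd, e, he, hde⟩ :=
    hr.1.exists_rel_of_one_lt_card (card_one.symm ▸ one_lt_two)
  obtain ⟨c, hc, -⟩ := hr.2.2.2
  let σ : Fin 5 → V := ![a, b, c, d, e]
  have score (i : Fin 5) : outDegree r (σ i) = modelScore i := by
    rw [Finset.mem_filter_univ] at ha hb hd he
    fin_cases i <;> assumption
  have same_score : ∀ i j, i < j → modelScore i = modelScore j →
      i = 0 ∧ j = 1 ∨ i = 3 ∧ j = 4 := by decide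
  have σ_injective : Function.Injective σ := by
    refine .of_lt_imp_ne fun i j hij hσ => ?_
    rcases same_score i j hij (by rw [← score, ← score, hσ]) with ⟨rfl, rfl⟩ | ⟨rfl, rfl⟩
    · have hab' : a = b := hσ
      exact hr.1.1 b (hab' ▸ hab)
    · have hde' : d = e := hσ
      exact hr.1.1 e (hde' ▸ hde)
  have σ_bijective : Function.Bijective σ :=
    (Fintype.bijective_iff_injective_and_card σ).mpr ⟨σ_injective, by rw [hV, Fintype.card_fin]⟩
  exact ⟨Equiv.ofBijective σ σ_bijective, hr.1.preimage σ_injective,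
    fun i => (outDegree_preimage r _ i).trans (score i), hab, hde⟩

lemma relabelledModel_surjective (hV : Fintype.card V = 5) :
    Function.Surjective (relabelledModel (V := V)) := by
  rintro ⟨r, hr⟩
  obtain ⟨σ, hσ⟩ := hr.exists_isLabelled_preimage hV
  obtain ⟨b, hb⟩ := hσ.exists_modelTournament_eq
  refine ⟨(σ.symm, b), Subtype.ext ?_⟩
  funext v w
  simp [relabelledModel, hb, Order.Preimage]

theorem count_one_vertex_of_outdegree_two_general (hV : Fintype.card V = 5) :
    Nat.card {r : V → V → Prop // HasUniqueMiddle r} = 240 := by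
  classical
  have ρ : V ≃ Fin 5 := Fintype.equivFinOfCardEq hV
  calc Nat.card {r : V → V → Prop // HasUniqueMiddle r}
      = Nat.card ((V ≃ Fin 5) × Bool) :=
        (Nat.card_eq_of_bijective relabelledModel
          ⟨relabelledModel_injective, relabelledModel_surjective hV⟩).symm
    _ = Nat.factorial 5 * 2 := by
        rw [Nat.card_eq_fintype_card, Fintype.card_prod, Fintype.card_equiv ρ, hV,
          Fintype.card_bool]
    _ = 240 := rfl

end Classification

/-- exactly 240 tournaments on Fin 5 have no vertex of out-degree 4,
no vertex of out-degree 0, and exactly one vertex of out-degree 2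
(the union Γ₁,₁ ∪ Γ₁,₂). -/
theorem count_one_vertex_of_outdegree_two :
    Nat.card {r : Fin 5 → Fin 5 → Prop //
      IsTournament r ∧ (¬ ∃ w, outDeg r w = 4) ∧ (¬ ∃ l, outDeg r l = 0) ∧
      (∃! v, outDeg r v = 2)} = 240 := by
  exact count_one_vertex_of_outdegree_two_general (Fintype.card_fin 5)
end

section
/- The number of tournaments on the 5-element set Fin 5 having no vertex of out-degree 4, no vertex of out-degree 0, exactly three vertices of out-degree 2 which form a directed 3-cycle among themselves, and such that the (unique) vertex of out-degree 3 defeats all three out-degree-2 vertices, is exactly 40. -/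
/-!
The out-degrees of a five-vertex tournament add up to 10, so apart from the 3-cycle of vertices of
out-degree 2 a member of `Γ₂,₁` has a vertex `p` of out-degree 3 and a vertex `q` of out-degree 1.
Since `p` dominates exactly the cycle, `q → p`, and since `q` dominates only `p`, the whole cycle
dominates `q`. Hence `Γ₂,₁` is a single isomorphism class. Its automorphisms are the three rotations
of the cycle, so by orbit counting it has `5! / 3 = 40` members.
-/

open Finset Equiv

section Relation

variable {V : Type*}

/-- A permutation `σ` of `V` is the same thing as an isomorphism from `r` to another relation `s`
on `V`: the relation `s` is the transport of `r` along `σ`. -/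
def permEquivSigmaRelIso (r : V → V → Prop) :
    Perm V ≃ Σ s : {s : V → V → Prop // Nonempty (r ≃r s)}, r ≃r s.1 where
  toFun σ :=
    have e := (RelIso.preimage σ.symm r).symm
    ⟨⟨_, ⟨e⟩⟩, e⟩
  invFun p := p.2.toEquiv
  left_inv _ := rfl
  right_inv := by
    rintro ⟨⟨s, _⟩, ⟨σ, hσ⟩⟩
    obtain rfl : s = ⇑σ.symm ⁻¹'o r := by
      ext a b
      simp [Order.Preimage, ← hσ]
    rfl

theorem card_isomorphic_mul_card_relIso [Finite V] (r : V → V → Prop) :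
    Nat.card {s : V → V → Prop // Nonempty (r ≃r s)} * Nat.card (r ≃r r) =
      (Nat.card V).factorial := by
  have isoEquivAut (s : {s : V → V → Prop // Nonempty (r ≃r s)}) : (r ≃r s.1) ≃ (r ≃r r) :=
    RelIso.relIsoCongr (RelIso.refl r) s.2.some.symm
  rw [← Nat.card_perm, ← Nat.card_prod]
  exact Nat.card_congr ((permEquivSigmaRelIso r).trans (sigmaEquivProdOfEquiv isoEquivAut)).symm

theorem ncard_setOf_rel_apply {W : Type*} {r : V → V → Prop} {s : W → W → Prop} (e : r ≃r s)
    (v : V) : {w | s (e v) w}.ncard = {w | r v w}.ncard := by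
  rw [← Set.ncard_image_of_injective _ e.injective]
  congr 1
  ext w
  obtain ⟨w, rfl⟩ := e.surjective w
  simp [e.map_rel_iff]

theorem sum_ncard_setOf_rel [Fintype V] (r : V → V → Prop) [Std.Asymm r] [Std.Trichotomous r] :
    ∑ v, {w | r v w}.ncard = (Fintype.card V).choose 2 := by
  classical
  have indicator_add (v w : V) :
      (if r v w then 1 else 0) + (if r w v then 1 else 0) = if v = w then 0 else 1 := by
    have := Std.Asymm.asymm (r := r) v w
    have := Std.Trichotomous.trichotomous (r := r) v w
    grind
  have sum_eq : ∑ v, {w | r v w}.ncard = ∑ v, ∑ w, if r v w then 1 else 0 := by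
    simp only [Set.ncard_eq_toFinset_card', Set.toFinset_ofPred, card_filter]
  have two_mul_sum : 2 * ∑ v, {w | r v w}.ncard = Fintype.card V * (Fintype.card V - 1) :=
    calc
      2 * ∑ v, {w | r v w}.ncard
          = ∑ v, ∑ w, (if r v w then 1 else 0) + ∑ v, ∑ w, (if r w v then 1 else 0) := by
        rw [two_mul, sum_eq, sum_comm (f := fun v w ↦ if r w v then 1 else 0)]
      _ = ∑ v : V, ∑ w : V, if v = w then 0 else 1 := by
        simp only [← sum_add_distrib, indicator_add]
      _ = Fintype.card V * (Fintype.card V - 1) := by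
        simp [sum_ite, filter_ne, card_erase_of_mem]
  rw [Nat.choose_two_right, ← two_mul_sum, Nat.mul_div_cancel_left _ two_pos]

theorem nonempty_relIso_of_map_rel [Finite V] {r s : V → V → Prop} [Std.Trichotomous r]
    [Std.Asymm s] (f : V → V) (hf : ∀ a b, r a b → s (f a) (f b)) : Nonempty (r ≃r s) :=
  let e := RelEmbedding.ofMonotone f hf
  ⟨RelIso.ofSurjective e (Finite.surjective_of_injective e.injective)⟩

end Relation

section Tournament

variable {r s : Fin 5 → Fin 5 → Prop}

theorem outDeg_eq_ncard (r : Fin 5 → Fin 5 → Prop) (v : Fin 5) :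
    outDeg r v = {w | r v w}.ncard :=
  rfl

theorem isTournament_iff : IsTournament r ↔ Std.Asymm r ∧ Std.Trichotomous r := by
  have xor_iff (a b : Fin 5) : Xor (r a b) (r b a) ↔ (r a b ∨ r b a) ∧ ¬(r a b ∧ r b a) :=
    xor_iff_or_and_not_and _ _
  constructor
  · rintro ⟨irrefl, xor⟩
    have or_and_not_and (a b : Fin 5) (hab : a ≠ b) := (xor_iff a b).mp (xor a b hab)
    exact ⟨⟨by grind⟩, ⟨by grind⟩⟩
  · rintro ⟨⟨asymm⟩, ⟨trichotomous⟩⟩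
    exact ⟨by grind, fun a b hab ↦ (xor_iff a b).mpr (by grind)⟩

theorem IsTournament.of_relIso (hr : IsTournament r) (e : r ≃r s) : IsTournament s := by
  obtain ⟨_, _⟩ := isTournament_iff.mp hr
  exact isTournament_iff.mpr ⟨e.symm.toRelEmbedding.asymm, e.symm.toRelEmbedding.trichotomous⟩

theorem IsTournament.sum_outDeg (hr : IsTournament r) : ∑ v, outDeg r v = 10 := by
  obtain ⟨_, _⟩ := isTournament_iff.mp hr
  exact sum_ncard_setOf_rel r

theorem outDeg_apply (e : r ≃r s) (v : Fin 5) : outDeg s (e v) = outDeg r v :=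
  ncard_setOf_rel_apply e v

theorem rel_iff_mem_of_outDeg_eq_card {v : Fin 5} {A : Finset (Fin 5)} (hA : ∀ w ∈ A, r v w)
    (hv : outDeg r v = #A) (w : Fin 5) : r v w ↔ w ∈ A := by
  have : (A : Set (Fin 5)) = {w | r v w} :=
    Set.eq_of_subset_of_ncard_le hA (by rw [← outDeg_eq_ncard, hv, Set.ncard_coe_finset])
  exact (Set.ext_iff.mp this w).symm

theorem IsTournament.exists_outDeg_eq_three_and_one (hr : IsTournament r)
    (h0 : ¬∃ l, outDeg r l = 0) {A : Finset (Fin 5)} (hA : #A = 3)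
    (h2 : ∀ v, outDeg r v = 2 ↔ v ∈ A) : ∃ p q, outDeg r p = 3 ∧ outDeg r q = 1 := by
  push Not at h0
  obtain ⟨p, q, hpq, hAc⟩ : ∃ p q, p ≠ q ∧ Aᶜ = {p, q} := by
    rw [← card_eq_two, card_compl, hA, Fintype.card_fin]
  have hp : p ∉ A := by simp [← mem_compl, hAc]
  have hq : q ∉ A := by simp [← mem_compl, hAc]
  have sum_A : ∑ v ∈ A, outDeg r v = 6 := by
    rw [sum_congr rfl fun v hv ↦ (h2 v).mpr hv, sum_const, hA, smul_eq_mul]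
  have add_eq_four : outDeg r p + outDeg r q = 4 := by
    have := sum_add_sum_compl A (outDeg r)
    rw [hr.sum_outDeg, sum_A, hAc, sum_pair hpq] at this
    lia
  rw [← h2] at hp hq
  have hcases : outDeg r p = 3 ∧ outDeg r q = 1 ∨ outDeg r q = 3 ∧ outDeg r p = 1 := by
    have := h0 p
    have := h0 q
    lia
  rcases hcases with h | h
  exacts [⟨p, q, h⟩, ⟨q, p, h⟩]

end Tournament

section Gamma21

variable {r s : Fin 5 → Fin 5 → Prop}

/-- Membership in the class `Γ₂,₁` of tournaments on `Fin 5`; the vertices `u`, `v`, `t` are the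
cyclically ordered ones of out-degree 2. -/
def IsGamma21 (r : Fin 5 → Fin 5 → Prop) : Prop :=
  IsTournament r ∧ (¬∃ w, outDeg r w = 4) ∧ (¬∃ l, outDeg r l = 0) ∧
    ∃ u v t : Fin 5, u ≠ v ∧ v ≠ t ∧ u ≠ t ∧
      outDeg r u = 2 ∧ outDeg r v = 2 ∧ outDeg r t = 2 ∧
      (∀ x, outDeg r x = 2 → x = u ∨ x = v ∨ x = t) ∧
      r u v ∧ r v t ∧ r t u ∧ ∀ x, outDeg r x = 3 → r x u ∧ r x v ∧ r x t

theorem IsGamma21.of_relIso (hr : IsGamma21 r) (e : r ≃r s) : IsGamma21 s := by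
  obtain ⟨tournament, h4, h0, u, v, t, huv, hvt, hut, hu, hv, ht, h2, ruv, rvt, rtu, h3⟩ := hr
  refine ⟨tournament.of_relIso e, ?_, ?_, e u, e v, e t, e.injective.ne huv, e.injective.ne hvt,
    e.injective.ne hut, (outDeg_apply e u).trans hu, (outDeg_apply e v).trans hv,
    (outDeg_apply e t).trans ht, ?_, e.map_rel_iff.mpr ruv, e.map_rel_iff.mpr rvt,
    e.map_rel_iff.mpr rtu, ?_⟩
  · rw [e.surjective.exists]
    simpa only [outDeg_apply e] using h4
  · rw [e.surjective.exists]
    simpa only [outDeg_apply e] using h0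
  · rw [e.surjective.forall]
    simpa only [outDeg_apply e, e.injective.eq_iff] using h2
  · rw [e.surjective.forall]
    simpa only [outDeg_apply e, e.map_rel_iff] using h3

/-- The representative of the class `Γ₂,₁`: the vertices `0 → 1 → 2 → 0` form the cycle, `3` has
out-degree 3 and `4` has out-degree 1. -/
def gamma21Model (a b : Fin 5) : Prop :=
  (a, b) ∈ ({(0, 1), (1, 2), (2, 0), (3, 0), (3, 1), (3, 2), (0, 4), (1, 4), (2, 4), (4, 3)} :
    Finset (Fin 5 × Fin 5))

instance : DecidableRel gamma21Model := fun _ _ ↦ inferInstanceAs (Decidable (_ ∈ _))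

theorem isTournament_gamma21Model : IsTournament gamma21Model :=
  isTournament_iff.mpr ⟨⟨by decide⟩, ⟨by decide⟩⟩

theorem outDeg_gamma21Model : outDeg gamma21Model = ![2, 2, 2, 3, 1] := by
  funext v
  rw [outDeg, Nat.card_eq_fintype_card]
  revert v
  decide

theorem isGamma21_gamma21Model : IsGamma21 gamma21Model := by
  refine ⟨isTournament_gamma21Model, ?_⟩
  rw [outDeg_gamma21Model]
  exact ⟨by decide, by decide, 0, 1, 2, by decide⟩

theorem IsGamma21.nonempty_relIso (hr : IsGamma21 r) : Nonempty (gamma21Model ≃r r) := by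
  obtain ⟨tournament, -, h0, u, v, t, huv, hvt, hut, hu, hv, ht, h2, ruv, rvt, rtu, h3⟩ := hr
  obtain ⟨_, _⟩ := isTournament_iff.mp tournament
  have rel_of_not_rel {a b : Fin 5} (hab : a ≠ b) (h : ¬r a b) : r b a :=
    (Xor.or (tournament.2 a b hab)).resolve_left h
  let cycle : Finset (Fin 5) := {u, v, t}
  have card_cycle : #cycle = 3 := card_eq_three.mpr ⟨u, v, t, huv, hut, hvt, rfl⟩
  have mem_cycle (w : Fin 5) : outDeg r w = 2 ↔ w ∈ cycle := by grind
  obtain ⟨p, q, hp, hq⟩ := tournament.exists_outDeg_eq_three_and_one h0 card_cycle mem_cycle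
  have p_notMem : p ∉ cycle := by simp [← mem_cycle, hp]
  have q_notMem : q ∉ cycle := by simp [← mem_cycle, hq]
  obtain ⟨rpu, rpv, rpt⟩ := h3 p hp
  have rp_iff : ∀ w, r p w ↔ w ∈ cycle :=
    rel_iff_mem_of_outDeg_eq_card (by simp [cycle, rpu, rpv, rpt]) (hp.trans card_cycle.symm)
  have rqp : r q p := rel_of_not_rel (by grind) (by rwa [rp_iff])
  have rq_iff : ∀ w, r q w ↔ w ∈ ({p} : Finset (Fin 5)) :=
    rel_iff_mem_of_outDeg_eq_card (by simp [rqp]) hq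
  have rel_q : ∀ w ∈ cycle, r w q := fun w hw ↦
    rel_of_not_rel (ne_of_mem_of_not_mem hw q_notMem).symm
      (by simpa [rq_iff] using ne_of_mem_of_not_mem hw p_notMem)
  obtain ⟨ruq, rvq, rtq⟩ : r u q ∧ r v q ∧ r t q := by simpa [cycle] using rel_q
  have : Std.Trichotomous gamma21Model := (isTournament_iff.mp isTournament_gamma21Model).2
  refine nonempty_relIso_of_map_rel ![u, v, t, p, q] ?_
  simp [gamma21Model, or_imp, forall_and, ruv, rvt, rtu, rpu, rpv, rpt, ruq, rvq, rtq, rqp]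

theorem isGamma21_iff_nonempty_relIso : IsGamma21 r ↔ Nonempty (gamma21Model ≃r r) :=
  ⟨IsGamma21.nonempty_relIso, fun ⟨e⟩ ↦ isGamma21_gamma21Model.of_relIso e⟩

-- An automorphism preserves out-degrees, hence fixes `3` and `4` and rotates the cycle `0, 1, 2`.
theorem gamma21Model_preserved_iff (σ : Perm (Fin 5)) :
    (∀ a b, gamma21Model (σ a) (σ b) ↔ gamma21Model a b) ↔
      σ ∈ ({1, c[0, 1, 2], c[0, 2, 1]} : Finset (Perm (Fin 5))) := by
  revert σ
  decide +kernel

theorem card_relIso_gamma21Model : Nat.card (gamma21Model ≃r gamma21Model) = 3 := by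
  let autEquiv : (gamma21Model ≃r gamma21Model) ≃
      {σ : Perm (Fin 5) // ∀ a b, gamma21Model (σ a) (σ b) ↔ gamma21Model a b} :=
    { toFun e := ⟨e.toEquiv, fun _ _ ↦ e.map_rel_iff⟩
      invFun σ := ⟨σ.1, σ.2 _ _⟩ }
  rw [Nat.card_congr (autEquiv.trans (subtypeEquivRight gamma21Model_preserved_iff)),
    Nat.card_eq_fintype_card, Fintype.card_coe]
  decide

end Gamma21

/-- exactly 40 tournaments on Fin 5 have no vertex of out-degree 4,
no vertex of out-degree 0, exactly three vertices of out-degree 2 forming a directed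
3-cycle, and the (unique) vertex of out-degree 3 defeats all three of them
(the class Γ₂,₁). -/
theorem count_Gamma21 :
    Nat.card {r : Fin 5 → Fin 5 → Prop //
      IsTournament r ∧ (¬ ∃ w, outDeg r w = 4) ∧ (¬ ∃ l, outDeg r l = 0) ∧
      (∃ u v t : Fin 5, u ≠ v ∧ v ≠ t ∧ u ≠ t ∧
        outDeg r u = 2 ∧ outDeg r v = 2 ∧ outDeg r t = 2 ∧
        (∀ x, outDeg r x = 2 → x = u ∨ x = v ∨ x = t) ∧
        r u v ∧ r v t ∧ r t u ∧
        (∀ x, outDeg r x = 3 → r x u ∧ r x v ∧ r x t))} = 40 := by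
  have card_eq : Nat.card {r // IsGamma21 r} = Nat.card {r // Nonempty (gamma21Model ≃r r)} :=
    Nat.card_congr (subtypeEquivRight fun _ ↦ isGamma21_iff_nonempty_relIso)
  have card_mul_three : Nat.card {r // IsGamma21 r} * 3 = Nat.factorial 5 := by
    rw [card_eq, ← card_relIso_gamma21Model, card_isomorphic_mul_card_relIso, Nat.card_fin]
  exact Nat.eq_of_mul_eq_mul_right three_pos card_mul_three
end
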